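/- For every odd n ≥ 3, W^(1)[g_{n+2}] / W^(1)[Maj_n] = (4n−1)/(4n). -/

import Mathlib

open Finset

namespace BKS

/-- sign function: 1 if z ≥ 0, -1 otherwise. -/
noncomputable def sgn (z : ℝ) : ℝ := if 0 ≤ z then 1 else -1

/-- encode Bool as the ±1 value of a bit. -/
def chi (b : Bool) : ℝ := if b then 1 else -1

/-- Fourier coefficient of f at S. -/
noncomputable def fourierCoeff {n : ℕ} (f : (Fin n → Bool) → ℝ) (S : Finset (Fin n)) : ℝ :=
  (1 / 2 ^ n : ℝ) * ∑ x : Fin n → Bool, f x * ∏ i ∈ S, chi (x i)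

/-- Fourier weight of f at level k: W^(k)[f]. -/
noncomputable def fourierWeight {n : ℕ} (k : ℕ) (f : (Fin n → Bool) → ℝ) : ℝ :=
  ∑ S ∈ Finset.univ.filter (fun S : Finset (Fin n) => S.card = k), (fourierCoeff f S) ^ 2

/-- Noise stability of f at ρ. -/
noncomputable def noiseStab {n : ℕ} (ρ : ℝ) (f : (Fin n → Bool) → ℝ) : ℝ :=
  ∑ k ∈ Finset.range (n + 1), ρ ^ k * fourierWeight k f

/-- Majority function on n bits. -/
noncomputable def Maj (n : ℕ) : (Fin n → Bool) → ℝ := fun x => sgn (∑ i, chi (x i))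

/-- The function g_n(x) = sgn(2(x_1 + ⋯ + x_{n-3}) + x_{n-2} + x_{n-1} + x_n). -/
noncomputable def gfun (n : ℕ) : (Fin n → Bool) → ℝ :=
  fun x => sgn (∑ i : Fin n, (if (i : ℕ) < n - 3 then (2 : ℝ) else 1) * chi (x i))

/-- f is a linear threshold function. -/
def IsLTF {n : ℕ} (f : (Fin n → Bool) → ℝ) : Prop :=
  ∃ (w0 : ℝ) (w : Fin n → ℝ), ∀ x, f x = sgn (w0 + ∑ i, w i * chi (x i))


lemma sgn_of_nonneg {z : ℝ} (h : 0 ≤ z) : sgn z = 1 := by simp [sgn, h]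

lemma sgn_of_neg {z : ℝ} (h : z < 0) : sgn z = -1 := by simp [sgn, h]

lemma weight_one {n : ℕ} (f : (Fin n → Bool) → ℝ) :
    fourierWeight 1 f = ∑ i, ((1 / 2 ^ n : ℝ) * ∑ x : Fin n → Bool, f x * chi (x i)) ^ 2 := by
  unfold fourierWeight
  have h : Finset.univ.filter (fun S : Finset (Fin n) => S.card = 1)
      = Finset.univ.map ⟨fun i : Fin n => ({i} : Finset (Fin n)), Finset.singleton_injective⟩ := by
    ext S
    simp [Finset.card_eq_one, eq_comm]
  rw [h, Finset.sum_map]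
  simp [fourierCoeff]

lemma sum_snoc {k : ℕ} (F : (Fin (k + 1) → Bool) → ℝ) :
    ∑ x, F x = ∑ x : Fin k → Bool,
      (F (Fin.snoc (α := fun _ => Bool) x true) + F (Fin.snoc (α := fun _ => Bool) x false)) := by
  rw [← (Fin.snocEquiv (fun _ : Fin (k + 1) => Bool)).sum_comp, Fintype.sum_prod_type,
    Finset.sum_comm]
  apply Finset.sum_congr rfl
  intro x _
  rw [Fintype.sum_bool]
  rfl

lemma even_sum (m : ℕ) (x : Fin (2 * m) → Bool) : ∃ k : ℤ, ∑ i, chi (x i) = 2 * (k : ℝ) := by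
  refine ⟨(∑ i, if x i then 1 else 0) - m, ?_⟩
  have : ∀ i, chi (x i) = 2 * (if x i then (1 : ℝ) else 0) - 1 := by
    intro i
    cases x i <;> norm_num [chi]
  simp only [this, Finset.sum_sub_distrib, ← Finset.mul_sum]
  push_cast
  simp
  ring

lemma trichotomy (m : ℕ) (x : Fin (2 * m) → Bool) :
    (∑ i, chi (x i) = 0) ∨ (2 ≤ ∑ i, chi (x i)) ∨ (∑ i, chi (x i) ≤ -2) := by
  obtain ⟨k, hk⟩ := even_sum m x
  rw [hk]
  rcases lt_trichotomy k 0 with h | h | h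
  · right; right
    have : (k : ℝ) ≤ -1 := by exact_mod_cast (by omega : k ≤ -1)
    linarith
  · left; simp [h]
  · right; left
    have : (1 : ℝ) ≤ k := by exact_mod_cast h
    linarith

/-- indicator of a tie -/
noncomputable def tie (a : ℝ) : ℝ := if a = 0 then 1 else 0

lemma maj_symm {n : ℕ} (i j : Fin n) :
    ∑ x, Maj n x * chi (x i) = ∑ x, Maj n x * chi (x j) := by
  rw [← ((Equiv.swap i j).arrowCongr (Equiv.refl Bool)).sum_comp]
  apply Finset.sum_congr rfl
  intro x _
  have : Maj n (((Equiv.swap i j).arrowCongr (Equiv.refl Bool)) x) = Maj n x := by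
    simp only [Maj]
    congr 1
    exact Equiv.sum_comp (Equiv.swap i j) (fun i => chi (x i))
  rw [this]
  simp [Equiv.arrowCongr]

lemma maj_last (m : ℕ) :
    ∑ x, Maj (2 * m + 1) x * chi (x (Fin.last _))
      = 2 * ∑ x : Fin (2 * m) → Bool, tie (∑ i, chi (x i)) := by
  rw [sum_snoc, Finset.mul_sum]
  apply Finset.sum_congr rfl
  intro x _
  simp only [Maj, Fin.sum_univ_castSucc, Fin.snoc_castSucc, Fin.snoc_last]
  have h1 : chi true = 1 := by simp [chi]
  have h2 : chi false = -1 := by simp [chi]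
  rw [h1, h2]
  rcases trichotomy m x with h | h | h
  · rw [h]; norm_num [sgn, tie]
  · have h0 : ∑ i, chi (x i) ≠ 0 := by linarith
    simp only [tie, if_neg h0]
    rw [sgn_of_nonneg (by linarith), sgn_of_nonneg (by linarith)]; norm_num
  · have h0 : ∑ i, chi (x i) ≠ 0 := by linarith
    simp only [tie, if_neg h0]
    rw [sgn_of_neg (by linarith), sgn_of_neg (by linarith)]; norm_num

lemma maj_cast (m : ℕ) (i : Fin (2 * m)) :
    ∑ x, Maj (2 * m + 1) x * chi (x i.castSucc)
      = ∑ x : Fin (2 * m) → Bool, (sgn (∑ i, chi (x i) + 1) + sgn (∑ i, chi (x i) - 1))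
          * chi (x i) := by
  rw [sum_snoc]
  apply Finset.sum_congr rfl
  intro x _
  simp only [Maj, Fin.sum_univ_castSucc, Fin.snoc_castSucc, Fin.snoc_last]
  have h1 : chi true = 1 := by simp [chi]
  have h2 : chi false = -1 := by simp [chi]
  rw [h1, h2, ← sub_eq_add_neg]
  ring

lemma gfun_snoc (m : ℕ) (x : Fin (2 * m) → Bool) (a b c : Bool) :
    gfun (2 * m + 1 + 2) (Fin.snoc (α := fun _ => Bool) (Fin.snoc (α := fun _ => Bool)
      (Fin.snoc (α := fun _ => Bool) x a) b) c)
      = sgn (2 * ∑ i, chi (x i) + chi a + chi b + chi c) := by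
  simp only [gfun]
  congr 1
  rw [Fin.sum_univ_castSucc, Fin.sum_univ_castSucc, Fin.sum_univ_castSucc]
  simp only [Fin.snoc_castSucc, Fin.snoc_last]
  have : 2 * m + 1 + 2 - 3 = 2 * m := by omega
  simp [this, Finset.mul_sum]

lemma g_cast (m : ℕ) (i : Fin (2 * m)) :
    ∑ x, gfun (2 * m + 1 + 2) x * chi (x i.castSucc.castSucc.castSucc)
      = 4 * ∑ x, Maj (2 * m + 1) x * chi (x i.castSucc) := by
  rw [maj_cast, sum_snoc, sum_snoc, sum_snoc, Finset.mul_sum]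
  apply Finset.sum_congr rfl
  intro x _
  simp only [gfun_snoc, Fin.snoc_castSucc]
  have h1 : chi true = 1 := by simp [chi]
  have h2 : chi false = -1 := by simp [chi]
  rw [h1, h2]
  rcases trichotomy m x with h | h | h
  · rw [h]; norm_num [sgn]; try ring
  · repeat rw [sgn_of_nonneg (by linarith)]
    ring
  · repeat rw [sgn_of_neg (by linarith)]
    ring

lemma g_tail (m : ℕ) (j : Fin (2 * m + 1 + 2)) (hj : j = Fin.last _ ∨
      j = (Fin.last _).castSucc ∨ j = (Fin.last _).castSucc.castSucc) :
    ∑ x, gfun (2 * m + 1 + 2) x * chi (x j)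
      = 4 * ∑ x : Fin (2 * m) → Bool, tie (∑ i, chi (x i)) := by
  rw [sum_snoc, sum_snoc, sum_snoc, Finset.mul_sum]
  apply Finset.sum_congr rfl
  intro x _
  have h1 : chi true = 1 := by simp [chi]
  have h2 : chi false = -1 := by simp [chi]
  rcases hj with rfl | rfl | rfl <;>
  · simp only [gfun_snoc, Fin.snoc_castSucc, Fin.snoc_last]
    rw [h1, h2]
    rcases trichotomy m x with h | h | h
    · rw [h]; norm_num [sgn, tie]
    · have h0 : ∑ i, chi (x i) ≠ 0 := by linarith
      simp only [tie, if_neg h0]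
      repeat rw [sgn_of_nonneg (by linarith)]
      ring
    · have h0 : ∑ i, chi (x i) ≠ 0 := by linarith
      simp only [tie, if_neg h0]
      repeat rw [sgn_of_neg (by linarith)]
      ring

lemma tie_pos (m : ℕ) : 0 < ∑ x : Fin (2 * m) → Bool, tie (∑ i, chi (x i)) := by
  apply Finset.sum_pos'
  · intro x _
    unfold tie
    split_ifs <;> norm_num
  · refine ⟨fun i => decide ((i : ℕ) % 2 = 0), Finset.mem_univ _, ?_⟩
    have : ∑ i : Fin (2 * m), chi (decide ((i : ℕ) % 2 = 0)) = 0 := by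
      rw [Fin.sum_univ_eq_sum_range (fun i => chi (decide (i % 2 = 0)))]
      induction m with
      | zero => simp
      | succ k ih =>
        rw [show 2 * (k + 1) = 2 * k + 1 + 1 by ring, Finset.sum_range_succ,
          Finset.sum_range_succ, ih]
        have : (2 * k + 1) % 2 = 1 := by omega
        simp [chi, this]
    rw [this]
    simp [tie]

theorem stmt14 (n : ℕ) (hn : Odd n) (h3 : 3 ≤ n) :
    fourierWeight 1 (gfun (n + 2)) / fourierWeight 1 (Maj n) =
      (4 * (n : ℝ) - 1) / (4 * (n : ℝ)) := by
  obtain ⟨m, rfl⟩ := hn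
  have hN := tie_pos m
  set N := ∑ x : Fin (2 * m) → Bool, tie (∑ i, chi (x i)) with hNdef
  have hmaj : ∀ i, ∑ x, Maj (2 * m + 1) x * chi (x i) = 2 * N := fun i => by
    rw [maj_symm i (Fin.last _), maj_last]
  rw [weight_one, weight_one]
  simp only [hmaj]
  rw [Fin.sum_univ_castSucc, Fin.sum_univ_castSucc, Fin.sum_univ_castSucc]
  simp only [g_cast, hmaj]
  rw [g_tail m _ (Or.inl rfl), g_tail m _ (Or.inr (Or.inl rfl)), g_tail m _ (Or.inr (Or.inr rfl)),
    ← hNdef]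
  simp only [Finset.sum_const, Finset.card_univ, Fintype.card_fin, nsmul_eq_mul]
  have hp : (0 : ℝ) < 2 ^ (2 * m) := by positivity
  have hm : (0 : ℝ) < 2 * m + 1 := by positivity
  push_cast
  rw [show 2 * m + 1 + 2 = 2 * m + 3 by ring, pow_add, pow_add]
  generalize (2 : ℝ) ^ (2 * m) = p at *
  field_simp
  ring

end BKS
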